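/- Let X be a finite set and let A be a nontrivial abelian subgroup of Sym(X) having exactly two orbits on X. Suppose that for every orbit O of A, if the factor group A_O/A_O^* is an elementary abelian 2-group, then A_O is an elementary abelian 2-group (i.e., a(a(x)) = x for all a ∈ A and x ∈ O). Then A is the automorphism group of a 4-coloured graph on X (A ∈ GR(4)). -/

import Mathlib

/-- The orbit of a point `x` under a set `G` of permutations of `X`. -/
def orbitOf {X : Type*} (G : Set (Equiv.Perm X)) (x : X) : Set X :=
  {y | ∃ a ∈ G, a x = y}

/-- A permutation `σ` is 2-orbit-compatible with `G` if for every pair of orbits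
`O` and `Q` of `G` there is an element of `G` agreeing with `σ` on `O ∪ Q`. -/
def TwoOrbitCompatible {X : Type*} (G : Set (Equiv.Perm X)) (σ : Equiv.Perm X) : Prop :=
  ∀ x y : X, ∃ a ∈ G, ∀ z ∈ orbitOf G x ∪ orbitOf G y, σ z = a z

/-- A subgroup `A ≤ Sym(X)` is 2-orbit-closed if every permutation that is
2-orbit-compatible with `A` belongs to `A`. -/
def TwoOrbitClosed {X : Type*} (A : Subgroup (Equiv.Perm X)) : Prop :=
  ∀ σ : Equiv.Perm X, TwoOrbitCompatible (A : Set (Equiv.Perm X)) σ → σ ∈ A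

/-- `A` is precisely the automorphism group of the `k`-coloured graph `γ` on `X`. -/
def IsColGraphAutGroup {X : Type*} {k : ℕ} (γ : Sym2 X → Fin k)
    (A : Subgroup (Equiv.Perm X)) : Prop :=
  ∀ σ : Equiv.Perm X, σ ∈ A ↔ ∀ x y : X, x ≠ y → γ s(σ x, σ y) = γ s(x, y)

/-- `A ∈ GR`: `A` is the automorphism group of some coloured graph on `X`. -/
def InGR {X : Type*} (A : Subgroup (Equiv.Perm X)) : Prop :=
  ∃ k : ℕ, 1 ≤ k ∧ ∃ γ : Sym2 X → Fin k, IsColGraphAutGroup γ A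

/-- `A ∈ GR(4)`: `A` is the automorphism group of some 4-coloured graph on `X`. -/
def InGR4 {X : Type*} (A : Subgroup (Equiv.Perm X)) : Prop :=
  ∃ γ : Sym2 X → Fin 4, IsColGraphAutGroup γ A

/-- The factor group `A_O / A_O^*` is an elementary abelian 2-group: for every `a ∈ A`,
the restriction of `a²` to `O` is the restriction of some element of `A` that fixes
every point outside `O`. -/
def FactorIsElem2 {X : Type*} (A : Subgroup (Equiv.Perm X)) (O : Set X) : Prop :=
  ∀ a ∈ A, ∃ b ∈ A, (∀ z ∈ O, b z = a (a z)) ∧ ∀ z ∉ O, b z = z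

/-!
An abelian permutation group with two orbits acts on each of them through a regular action of a
quotient, so it is the fibre product of two abelian groups `G` and `H` over a common quotient `K`,
acting on the disjoint union of `G` and `H` by translations.

Inside `G` and `H` the colour of a pair depends on the difference only. The colours make an
irredundant family of generators into a path with one marked end, and a permutation that preserves
the colours and fixes `0` and the marked generator is then forced to fix all the generators along
the path. Hence only a sign can tell a permutation preserving the colours from a translation. The
colour of a pair between `G` and `H` depends on its value in `K`: marking `0` makes the
permutations of `G` and `H` agree in `K`, and marking also an element of nonzero double rules out
the sign.

The two orbits are told apart by the degree of the fourth colour, which does not occur between them.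
If `K` does not have exponent two, then the sign on `H` is visible in `K`, so the marked generator
of `H` need not have a colour of its own and only `G` uses the fourth colour. If `K` has exponent
two, then by hypothesis so do `G` and `H`; there is no sign, and `G` has exactly one difference of
the fourth colour. The colours of `H` can be permuted so that this fails in `H`, because otherwise
each colour would occur for exactly one nonzero difference and `H` would have five elements.
-/

section Generation

variable {G : Type*}

theorem addSubgroup_closure_compl_eq_top [AddGroup G] {L : AddSubgroup G} (hL : L ≠ ⊤) :
    AddSubgroup.closure (L : Set G)ᶜ = ⊤ := by
  have hcover : ((⊤ : AddSubgroup G) : Set G) ⊆ L ∪ AddSubgroup.closure (L : Set G)ᶜ := fun g _ =>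
    or_iff_not_imp_left.mpr fun hg => AddSubgroup.subset_closure hg
  rcases AddSubgroupClass.subset_union.mp hcover with h | h
  · exact absurd (top_le_iff.mp h) hL
  · exact top_le_iff.mp h

theorem eq_apply_zero_of_periodic_of_closure_eq_top [AddGroup G] {α : Type*} {f : G → α}
    {T : Set G} (hT : AddSubgroup.closure T = ⊤) (hf : ∀ t ∈ T, Function.Periodic f t) (x : G) :
    f x = f 0 := by
  have hx : x ∈ AddSubgroup.closure T := hT ▸ AddSubgroup.mem_top x
  suffices Function.Periodic f x from this.eq
  induction hx using AddSubgroup.closure_induction with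
  | mem t ht => exact hf t ht
  | zero => exact fun y => by rw [add_zero]
  | add _ _ _ _ ha hb => exact ha.add_period hb
  | neg _ _ ha => exact ha.neg

theorem eq_apply_zero_add_of_closure_eq_top [AddGroup G] {M : Type*} [AddCommGroup M]
    {T : Set G} (hT : AddSubgroup.closure T = ⊤) {σ : G → M} (φ : G →+ M)
    (hσ : ∀ x, ∀ t ∈ T, σ (x + t) = σ x + φ t) (x : G) : σ x = σ 0 + φ x := by
  have hperiod : ∀ t ∈ T, Function.Periodic (fun y => σ y - φ y) t := fun t ht y => by
    simp only [hσ y t ht, map_add, add_sub_add_right_eq_sub]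
  have h := eq_apply_zero_of_periodic_of_closure_eq_top hT hperiod x
  simpa only [map_zero, sub_zero, sub_eq_iff_eq_add] using h

/-- A family in an additive group is irredundant if no member lies in the subgroup generated by the
others; for a generating family this says that no member can be omitted. -/
def Irredundant [AddGroup G] {ι : Type*} (s : ι → G) : Prop :=
  ∀ i, s i ∉ AddSubgroup.closure (s '' {i}ᶜ)

theorem exists_irredundant_of_closure_eq_top [AddGroup G] [Nontrivial G] {T : Set G}
    (hfin : T.Finite) (hT : AddSubgroup.closure T = ⊤) :
    ∃ (n : ℕ) (s : Fin (n + 1) → G), (∀ i, s i ∈ T) ∧ Irredundant s ∧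
      AddSubgroup.closure (Set.range s) = ⊤ := by
  obtain ⟨S, ⟨hST, hS⟩, hmin⟩ :=
    (hfin.finite_subsets.subset
      fun S (hS : S ⊆ T ∧ AddSubgroup.closure S = ⊤) => hS.1).exists_minimal ⟨T, subset_rfl, hT⟩
  have hne : S.Nonempty := Set.nonempty_iff_ne_empty.mpr fun h => by
    rw [h, AddSubgroup.closure_empty] at hS
    exact bot_ne_top hS
  obtain ⟨n, s, hinj, rfl⟩ := (hfin.subset hST).fin_param
  obtain ⟨_, i, _⟩ := hne
  obtain ⟨n, rfl⟩ : ∃ k, n = k + 1 := Nat.exists_eq_succ_of_ne_zero i.pos.ne'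
  refine ⟨n, s, fun i => hST (Set.mem_range_self i), fun i hi => ?_, hS⟩
  have hS' : AddSubgroup.closure (s '' {i}ᶜ) = ⊤ := by
    rw [eq_top_iff, ← hS, AddSubgroup.closure_le]
    rintro _ ⟨j, rfl⟩
    rcases eq_or_ne j i with rfl | hj
    · exact hi
    · exact AddSubgroup.subset_closure (Set.mem_image_of_mem s hj)
  obtain ⟨j, hj, hji⟩ := hmin ⟨(Set.image_subset_range s _).trans hST, hS'⟩
    (Set.image_subset_range s _) (Set.mem_range_self i)
  exact hj (hinj hji)

end Generation

section UpToSign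

variable {G : Type*}

/-- `d` and `g` agree up to sign, that is, they define the same edges of a Cayley graph. -/
def EqUpToSign [AddGroup G] (d g : G) : Prop :=
  d = g ∨ d = -g

theorem EqUpToSign.refl [AddGroup G] (g : G) : EqUpToSign g g :=
  Or.inl rfl

theorem EqUpToSign.symm [AddGroup G] {d g : G} (h : EqUpToSign d g) :
    EqUpToSign g d :=
  h.imp Eq.symm fun h => neg_eq_iff_eq_neg.mp h.symm

theorem EqUpToSign.map {K : Type*} [AddGroup G] [AddGroup K] {d g : G} (h : EqUpToSign d g)
    (ψ : G →+ K) : EqUpToSign (ψ d) (ψ g) :=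
  h.imp (congrArg ψ) fun h => by rw [h, map_neg]

theorem EqUpToSign.add_self_eq_zero_iff [AddGroup G] {d g : G}
    (h : EqUpToSign d g) : d + d = 0 ↔ g + g = 0 := by
  rcases h with rfl | rfl
  · rfl
  · rw [← neg_add_rev, neg_eq_zero]

theorem EqUpToSign.mem_iff [AddGroup G] {d g : G} (h : EqUpToSign d g) (L : AddSubgroup G) :
    d ∈ L ↔ g ∈ L := by
  rcases h with rfl | rfl
  · rfl
  · exact neg_mem_iff

theorem eqUpToSign_neg_left_iff [AddGroup G] {d g : G} : EqUpToSign (-d) g ↔ EqUpToSign d g := by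
  rw [EqUpToSign, EqUpToSign, neg_inj, neg_eq_iff_eq_neg, or_comm]

theorem eqUpToSign_iff_exists_units_smul [AddCommGroup G] {d g : G} :
    EqUpToSign d g ↔ ∃ ε : ℤˣ, d = ε • g := by
  refine ⟨?_, fun ⟨ε, h⟩ => ?_⟩
  · rintro (rfl | rfl)
    · exact ⟨1, (one_smul _ _).symm⟩
    · exact ⟨-1, by simp [Units.smul_def]⟩
  · rcases Int.units_eq_one_or ε with rfl | rfl
    · exact Or.inl (by simpa using h)
    · exact Or.inr (by simpa [Units.smul_def] using h)

theorem eqUpToSign_units_smul [AddCommGroup G] (ε : ℤˣ) (g : G) : EqUpToSign (ε • g) g :=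
  eqUpToSign_iff_exists_units_smul.mpr ⟨ε, rfl⟩

end UpToSign

section Irredundant

variable {G ι : Type*} [AddGroup G] {s : ι → G}

theorem mem_closure_image_compl_singleton {i j : ι} (h : j ≠ i) :
    s j ∈ AddSubgroup.closure (s '' {i}ᶜ) :=
  AddSubgroup.subset_closure (Set.mem_image_of_mem s h)

theorem Irredundant.ne_zero (hs : Irredundant s) (i : ι) : s i ≠ 0 := fun h =>
  hs i (h ▸ zero_mem _)

theorem Irredundant.not_eqUpToSign (hs : Irredundant s) {i j : ι} (hij : i ≠ j) :
    ¬EqUpToSign (s i) (s j) := fun h =>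
  hs i ((h.mem_iff _).mpr (mem_closure_image_compl_singleton hij.symm))

theorem Irredundant.injective (hs : Irredundant s) : Function.Injective s := fun i j h => by
  by_contra hij
  exact hs.not_eqUpToSign hij (Or.inl h)

theorem Irredundant.eq_of_eqUpToSign_sub (hs : Irredundant s) {i j k : ι} {v : G}
    (hv : EqUpToSign v (s j)) (h : EqUpToSign (v - s i) (s k)) : k = j := by
  by_contra hkj
  rcases eq_or_ne i j with rfl | hij
  · have hi := mem_closure_image_compl_singleton (s := s) (Ne.symm hkj)
    exact hs k ((h.mem_iff _).mp (sub_mem ((hv.mem_iff _).mpr hi) hi))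
  · have hdiff := (h.mem_iff _).mpr (mem_closure_image_compl_singleton hkj)
    have hi := mem_closure_image_compl_singleton (s := s) hij
    exact hs j ((hv.mem_iff _).mp (sub_add_cancel v (s i) ▸ add_mem hdiff hi))

theorem Irredundant.not_eqUpToSign_sub (hs : Irredundant s) {i j k : ι} (hij : i ≠ j) :
    ¬EqUpToSign (s i - s j) (s k) := fun h => by
  have hki : k = i := hs.eq_of_eqUpToSign_sub (.refl _) h
  have hkj : k = j := hs.eq_of_eqUpToSign_sub (.refl _)
    (by rwa [← eqUpToSign_neg_left_iff, neg_sub])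
  exact hij (hki.symm.trans hkj)

theorem Irredundant.eq_or_eq_of_eqUpToSign_sub_sub (hs : Irredundant s) {i j k l : ι} {v : G}
    (hv : EqUpToSign v (s j)) (hkl : k ≠ l) (h : EqUpToSign (v - s i) (s k - s l)) :
    k = i ∨ k = j := by
  by_contra! hk
  have hvi : v - s i ∈ AddSubgroup.closure (s '' {k}ᶜ) :=
    sub_mem ((hv.mem_iff _).mpr (mem_closure_image_compl_singleton hk.2.symm))
      (mem_closure_image_compl_singleton hk.1.symm)
  have hl := mem_closure_image_compl_singleton (s := s) hkl.symm
  exact hs k (sub_add_cancel (s k) (s l) ▸ add_mem ((h.mem_iff _).mp hvi) hl)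

end Irredundant

section DiffColor

variable {G C : Type*}

/-- `σ` preserves the colour `f (x - y)` of all ordered pairs; for even `f` these are the
endomorphisms of the coloured Cayley graph of `f`. -/
def PreservesDiffColor [AddGroup G] (f : G → C) (σ : G → G) : Prop :=
  ∀ x y, f (σ x - σ y) = f (x - y)

theorem apply_units_smul_of_even [AddCommGroup G] {f : G → C} (hf : ∀ d, f (-d) = f d)
    (ε : ℤˣ) (d : G) : f (ε • d) = f d := by
  rcases eqUpToSign_units_smul ε d with h | h <;> simp only [h, hf]

theorem PreservesDiffColor.units_smul_sub [AddCommGroup G] {f : G → C} (hf : ∀ d, f (-d) = f d)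
    {σ : G → G} (hσ : PreservesDiffColor f σ) (ε : ℤˣ) (x : G) :
    PreservesDiffColor f fun y => ε • (σ (x + y) - σ x) := fun y z => by
  rw [← smul_sub, apply_units_smul_of_even hf, sub_sub_sub_cancel_right, hσ,
    add_sub_add_left_eq_sub]

end DiffColor

section PathColor

variable {G : Type*} [AddCommGroup G] {n : ℕ} {s : Fin (n + 1) → G} {u : Fin 4} {d : G}

open Classical in
/-- Colouring of the differences in a group with generators `s 0, …, s n`: the root `± s 0` gets the
colour `u`, the other generators get colour `1`, the differences of consecutive generators get
colour `2` and everything else gets colour `0`. It makes the generators into a path whose end `s 0`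
is marked by `u`. -/
noncomputable def pathColor (s : Fin (n + 1) → G) (u : Fin 4) (d : G) : Fin 4 :=
  if EqUpToSign d (s 0) then u
  else if ∃ i : Fin n, EqUpToSign d (s i.succ) then 1
  else if ∃ i : Fin n, EqUpToSign d (s i.succ - s i.castSucc) then 2
  else 0

theorem pathColor_neg (s : Fin (n + 1) → G) (u : Fin 4) (d : G) :
    pathColor s u (-d) = pathColor s u d := by
  classical
  exact if_congr eqUpToSign_neg_left_iff rfl <|
    if_congr (exists_congr fun _ => eqUpToSign_neg_left_iff) rfl <|
      if_congr (exists_congr fun _ => eqUpToSign_neg_left_iff) rfl rfl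

theorem pathColor_root (s : Fin (n + 1) → G) (u : Fin 4) : pathColor s u (s 0) = u :=
  if_pos (.refl _)

theorem pathColor_succ (hs : Irredundant s) (u : Fin 4) (i : Fin n) :
    pathColor s u (s i.succ) = 1 := by
  rw [pathColor, if_neg (hs.not_eqUpToSign i.succ_ne_zero), if_pos ⟨i, .refl _⟩]

theorem pathColor_succ_sub_castSucc (hs : Irredundant s) (u : Fin 4) (i : Fin n) :
    pathColor s u (s i.succ - s i.castSucc) = 2 := by
  have hne : i.succ ≠ i.castSucc := Fin.castSucc_lt_succ.ne'
  rw [pathColor, if_neg (hs.not_eqUpToSign_sub hne),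
    if_neg fun ⟨_, h⟩ => hs.not_eqUpToSign_sub hne h, if_pos ⟨i, .refl _⟩]

theorem exists_eqUpToSign_succ_of_pathColor_eq_one (hu : u ≠ 1) (h : pathColor s u d = 1) :
    ∃ i : Fin n, EqUpToSign d (s i.succ) := by
  unfold pathColor at h
  split_ifs at h with hroot hgen
  · exact absurd h hu
  · exact hgen
  · simp at h
  · simp at h

theorem eqUpToSign_root_or_sub_of_pathColor_eq_two (h : pathColor s u d = 2) :
    EqUpToSign d (s 0) ∨ ∃ i : Fin n, EqUpToSign d (s i.succ - s i.castSucc) := by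
  unfold pathColor at h
  split_ifs at h with hroot hgen hpath
  · exact Or.inl hroot
  · simp at h
  · exact Or.inr hpath
  · simp at h

theorem pathColor_three_eq_three_iff : pathColor s 3 d = 3 ↔ EqUpToSign d (s 0) := by
  unfold pathColor
  split_ifs with hroot <;> simp [hroot]

theorem pathColor_two_ne_three (s : Fin (n + 1) → G) (d : G) : pathColor s 2 d ≠ 3 := by
  unfold pathColor
  split_ifs <;> simp

theorem Irredundant.eq_of_eqUpToSign_sub_sub {ι : Type*} {s : ι → G} (hs : Irredundant s)
    (hinv : ∀ i j, s i + s i = 0 → s j + s j = 0) {i j k l : ι} {v : G}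
    (hv : EqUpToSign v (s j)) (hkl : k ≠ l) (h : EqUpToSign (v - s i) (s k - s l)) :
    v = s j ∧ (k = i ∧ l = j ∨ k = j ∧ l = i) := by
  have h' : EqUpToSign (v - s i) (s l - s k) := by
    simpa only [EqUpToSign, neg_sub, or_comm] using h
  have hkl' : k = i ∧ l = j ∨ k = j ∧ l = i := by
    have hk := hs.eq_or_eq_of_eqUpToSign_sub_sub hv hkl h
    have hl := hs.eq_or_eq_of_eqUpToSign_sub_sub hv hkl.symm h'
    grind
  refine ⟨?_, hkl'⟩
  have hij : EqUpToSign (v - s i) (s i - s j) := by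
    rcases hkl' with ⟨rfl, rfl⟩ | ⟨rfl, rfl⟩
    exacts [h, h']
  rcases hv with rfl | rfl
  · rfl
  have hjj : s j + s j = 0 := by
    rcases hij with h | h
    · refine hinv i j ?_
      calc s i + s i = (s i - s j) - (-s j - s i) := by abel
        _ = 0 := by rw [h, sub_self]
    · calc s j + s j = -(s i - s j) - (-s j - s i) := by abel
        _ = 0 := by rw [h, sub_self]
  exact (eq_neg_of_add_eq_zero_left hjj).symm

/-- The image of `s (i + 1)` is `± s j` for some `j ≠ 0` and is joined to `s i` by a path edge,
which leaves only the two neighbours of `s i` on the path; the preceding one is already taken. -/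
theorem apply_eq_self_of_preserves_pathColor (hs : Irredundant s)
    (hinv : ∀ i j, s i + s i = 0 → s j + s j = 0) (hu : u ≠ 1) {τ : G → G}
    (hinj : Function.Injective τ) (hτ : PreservesDiffColor (pathColor s u) τ) (hzero : τ 0 = 0)
    (hroot : τ (s 0) = s 0) (i : Fin (n + 1)) : τ (s i) = s i := by
  induction i using WellFoundedLT.induction with
  | ind i ih =>
    cases i using Fin.cases with
    | zero => exact hroot
    | succ i =>
      have hprev : τ (s i.castSucc) = s i.castSucc := ih _ Fin.castSucc_lt_succ
      have hgen : pathColor s u (τ (s i.succ)) = 1 := by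
        simpa only [hzero, sub_zero, pathColor_succ hs] using hτ (s i.succ) 0
      have hpath : pathColor s u (τ (s i.succ) - s i.castSucc) = 2 := by
        simpa only [hprev, pathColor_succ_sub_castSucc hs] using hτ (s i.succ) (s i.castSucc)
      obtain ⟨j, hj⟩ := exists_eqUpToSign_succ_of_pathColor_eq_one hu hgen
      rcases eqUpToSign_root_or_sub_of_pathColor_eq_two hpath with h | ⟨k, hk⟩
      · exact absurd (hs.eq_of_eqUpToSign_sub hj h).symm j.succ_ne_zero
      obtain ⟨hval, ⟨hki, hkj⟩ | ⟨hkj, hki⟩⟩ :=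
        hs.eq_of_eqUpToSign_sub_sub hinv hj Fin.castSucc_lt_succ.ne' hk
      · have hlt : j.succ < i.succ := hkj ▸ (Fin.castSucc_lt_succ.trans_eq hki).trans
          Fin.castSucc_lt_succ
        have hfix : τ (s j.succ) = s j.succ := ih _ hlt
        exact absurd (hs.injective (hinj (hval.trans hfix.symm))) hlt.ne'
      · rw [hval, ← hkj, Fin.castSucc_injective _ hki]

theorem apply_add_of_apply_add_root (hs : Irredundant s)
    (hinv : ∀ i j, s i + s i = 0 → s j + s j = 0) (hu : u ≠ 1) {σ : G → G}
    (hinj : Function.Injective σ) (hσ : PreservesDiffColor (pathColor s u) σ) {x : G} {ε : ℤˣ}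
    (hroot : σ (x + s 0) = σ x + ε • s 0) (i : Fin (n + 1)) : σ (x + s i) = σ x + ε • s i := by
  have hfix : ε⁻¹ • (σ (x + s i) - σ x) = s i :=
    apply_eq_self_of_preserves_pathColor hs hinv hu
      (τ := fun y => ε⁻¹ • (σ (x + y) - σ x))
      (fun y z h => by simpa [hinj.eq_iff] using h)
      (hσ.units_smul_sub (pathColor_neg s u) ε⁻¹ x) (by simp)
      (by simp only [hroot, add_sub_cancel_left, inv_smul_smul]) i
  rwa [inv_smul_eq_iff, sub_eq_iff_eq_add'] at hfix

theorem exists_units_smul_of_preserves_pathColor_three (hs : Irredundant s)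
    (hinv : ∀ i j, s i + s i = 0 → s j + s j = 0) {σ : G → G}
    (hinj : Function.Injective σ) (hσ : PreservesDiffColor (pathColor s 3) σ) (x : G) :
    ∃ ε : ℤˣ, ∀ i, σ (x + s i) = σ x + ε • s i := by
  have hroot : pathColor s 3 (σ (x + s 0) - σ x) = 3 := by
    simpa only [add_sub_cancel_left, pathColor_root] using hσ (x + s 0) x
  obtain ⟨ε, hε⟩ := eqUpToSign_iff_exists_units_smul.mp (pathColor_three_eq_three_iff.mp hroot)
  exact ⟨ε, apply_add_of_apply_add_root hs hinv (by decide) hinj hσ (sub_eq_iff_eq_add'.mp hε)⟩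

/-- The sign is the same at `x` and `x + s i`: otherwise `σ (x + s i + s i) = σ x`, which is
impossible for an injective `σ` unless `s i` is an involution. -/
theorem eq_add_units_smul_of_preserves_pathColor_three (hs : Irredundant s)
    (hgen : AddSubgroup.closure (Set.range s) = ⊤) (hinv : ∀ i, s i + s i ≠ 0) {σ : G → G}
    (hinj : Function.Injective σ) (hσ : PreservesDiffColor (pathColor s 3) σ) :
    ∃ ε : ℤˣ, ∀ x, σ x = σ 0 + ε • x := by
  choose ε hε using exists_units_smul_of_preserves_pathColor_three hs
    (fun i _ h => absurd h (hinv i)) hinj hσ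
  have hperiod : ∀ t ∈ Set.range s, Function.Periodic ε t := by
    rintro _ ⟨i, rfl⟩ x
    by_contra hne
    have hback : σ (x + s i + s i) = σ x := by
      rw [hε, hε, Int.units_ne_iff_eq_neg.mp hne, Units.neg_smul, add_neg_cancel_right]
    exact hinv i (by simpa [add_assoc] using hinj hback)
  have hconst := eq_apply_zero_of_periodic_of_closure_eq_top hgen hperiod
  refine ⟨ε 0, eq_apply_zero_add_of_closure_eq_top hgen (DistribSMul.toAddMonoidHom G (ε 0)) ?_⟩
  rintro x _ ⟨i, rfl⟩
  rw [hε, hconst, DistribSMul.toAddMonoidHom_apply]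

theorem eq_add_of_preserves_pathColor_three_of_add_self_eq_zero (hs : Irredundant s)
    (hgen : AddSubgroup.closure (Set.range s) = ⊤) (hG : ∀ g : G, g + g = 0) {σ : G → G}
    (hinj : Function.Injective σ) (hσ : PreservesDiffColor (pathColor s 3) σ) (x : G) :
    σ x = σ 0 + x := by
  refine eq_apply_zero_add_of_closure_eq_top hgen (AddMonoidHom.id G) ?_ x
  rintro x _ ⟨i, rfl⟩
  obtain ⟨ε, hε⟩ := exists_units_smul_of_preserves_pathColor_three hs
    (fun _ j _ => hG (s j)) hinj hσ x
  rw [hε, AddMonoidHom.id_apply]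
  rcases eqUpToSign_units_smul ε (s i) with h | h <;> rw [h]
  rw [← eq_neg_of_add_eq_zero_left (hG (s i))]

theorem eq_add_of_preserves_pathColor_two {K : Type*} [AddCommGroup K] {ψ : G →+ K}
    (hs : Irredundant s) (hgen : AddSubgroup.closure (Set.range s) = ⊤)
    (hinv : ∀ i, ψ (s i) + ψ (s i) ≠ 0)
    (hpath : ∀ i : Fin n, ¬EqUpToSign (ψ (s i.succ - s i.castSucc)) (ψ (s 0)))
    {σ : G → G} (hinj : Function.Injective σ) (hσ : PreservesDiffColor (pathColor s 2) σ)
    {κ : K} (hψ : ∀ x, ψ (σ x) = κ + ψ x) (x : G) : σ x = σ 0 + x := by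
  have hinv' : ∀ i j, s i + s i = 0 → s j + s j = 0 := fun i _ h =>
    absurd (by rw [← map_add, h, map_zero]) (hinv i)
  have hroot : ∀ x, σ (x + s 0) - σ x = s 0 := fun x => by
    have hcolor : pathColor s 2 (σ (x + s 0) - σ x) = 2 := by
      simpa only [add_sub_cancel_left, pathColor_root] using hσ (x + s 0) x
    have himage : ψ (σ (x + s 0) - σ x) = ψ (s 0) := by
      rw [map_sub, hψ, hψ, map_add]
      abel
    rcases eqUpToSign_root_or_sub_of_pathColor_eq_two hcolor with (h | h) | ⟨i, h⟩
    · exact h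
    · rw [h, map_neg] at himage
      exact absurd (neg_eq_iff_add_eq_zero.mp himage) (hinv 0)
    · rcases h with h | h
      · exact absurd (Or.inl (h ▸ himage)) (hpath i)
      · refine absurd (Or.inr ?_) (hpath i)
        rw [← himage, h, map_neg, neg_neg]
  refine eq_apply_zero_add_of_closure_eq_top hgen (AddMonoidHom.id G) ?_ x
  rintro x _ ⟨i, rfl⟩
  have hstep := apply_add_of_apply_add_root hs hinv' (by decide) hinj hσ (ε := 1)
    (by simpa only [one_smul, sub_eq_iff_eq_add'] using hroot x) i
  simpa only [one_smul, AddMonoidHom.id_apply] using hstep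

end PathColor

section SignChoice

theorem closure_image_le_of_eqUpToSign {G ι : Type*} [AddGroup G] {s t : ι → G}
    (h : ∀ i, EqUpToSign (t i) (s i)) (S : Set ι) :
    AddSubgroup.closure (t '' S) ≤ AddSubgroup.closure (s '' S) := by
  rw [AddSubgroup.closure_le]
  rintro _ ⟨i, hi, rfl⟩
  exact ((h i).mem_iff _).mpr (AddSubgroup.subset_closure (Set.mem_image_of_mem s hi))

theorem Irredundant.of_eqUpToSign {G ι : Type*} [AddGroup G] {s t : ι → G} (hs : Irredundant s)
    (h : ∀ i, EqUpToSign (t i) (s i)) : Irredundant t := fun i hi =>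
  hs i (closure_image_le_of_eqUpToSign h _ (((h i).mem_iff _).mp hi))

theorem closure_range_eq_top_of_eqUpToSign {G ι : Type*} [AddGroup G] {s t : ι → G}
    (hs : AddSubgroup.closure (Set.range s) = ⊤) (h : ∀ i, EqUpToSign (t i) (s i)) :
    AddSubgroup.closure (Set.range t) = ⊤ := by
  rw [eq_top_iff, ← hs, ← Set.image_univ, ← Set.image_univ]
  exact closure_image_le_of_eqUpToSign (fun i => (h i).symm) _

theorem not_eqUpToSign_sub_or_neg_sub {K : Type*} [AddCommGroup K] {b c : K} (hb : b + b ≠ 0)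
    (hc : c + c ≠ 0) (a : K) : ¬EqUpToSign (c - b) a ∨ ¬EqUpToSign (-c - b) a := by
  by_contra! ⟨h₁, h₂⟩
  have hsum : c - b + (-c - b) = -(b + b) := by abel
  have hdiff : c - b - (-c - b) = c + c := by abel
  rcases h₁ with h₁ | h₁ <;> rcases h₂ with h₂ | h₂ <;> rw [h₁, h₂] at hsum hdiff
  · exact hc (hdiff.symm.trans (sub_self _))
  · exact hb (neg_eq_zero.mp (hsum.symm.trans (add_neg_cancel _)))
  · exact hb (neg_eq_zero.mp (hsum.symm.trans (neg_add_cancel _)))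
  · exact hc (hdiff.symm.trans (sub_self _))

theorem exists_eqUpToSign_forall_not_eqUpToSign_sub {G K : Type*} [AddCommGroup G]
    [AddCommGroup K] (ψ : G →+ K) {n : ℕ} {s : Fin (n + 1) → G}
    (hinv : ∀ i, ψ (s i) + ψ (s i) ≠ 0) :
    ∃ t : Fin (n + 1) → G, (∀ i, EqUpToSign (t i) (s i)) ∧
      ∀ i : Fin n, ¬EqUpToSign (ψ (t i.succ - t i.castSucc)) (ψ (t 0)) := by
  have hstep : ∀ (i : Fin n) (b : G), ∃ c, EqUpToSign c (s i.succ) ∧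
      (EqUpToSign b (s i.castSucc) → ¬EqUpToSign (ψ (c - b)) (ψ (s 0))) := fun i b => by
    by_cases hb : EqUpToSign b (s i.castSucc)
    · have hψb := (hb.map ψ).add_self_eq_zero_iff.not.mpr (hinv i.castSucc)
      rcases not_eqUpToSign_sub_or_neg_sub hψb (hinv i.succ) (ψ (s 0)) with h | h
      · exact ⟨s i.succ, .refl _, fun _ => by rwa [map_sub]⟩
      · exact ⟨-s i.succ, Or.inr rfl, fun _ => by rwa [map_sub, map_neg]⟩
    · exact ⟨s i.succ, .refl _, fun h => absurd h hb⟩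
  choose next hnext hsep using hstep
  let t : Fin (n + 1) → G := Fin.induction (s 0) next
  have ht : ∀ i, EqUpToSign (t i) (s i) := Fin.cases (.refl _) fun i => hnext i (t i.castSucc)
  exact ⟨t, ht, fun i => hsep i _ (ht i.castSucc)⟩

end SignChoice

section SumColor

variable {G H K C : Type*} [AddCommGroup G] [AddCommGroup H] [AddCommGroup K] {φ : G →+ K}
  {ψ : H →+ K} {f : G → C} {h : H → C} {c : K → C} {k : C}

/-- The fibre product of `φ : G → K` and `ψ : H → K`, acting on the disjoint union of `G` and `H` by
translations. Every abelian permutation group with two orbits is of this form. -/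
def translationPairs (φ : G →+ K) (ψ : H →+ K) : Subgroup (Equiv.Perm (G ⊕ H)) where
  carrier := {σ | ∃ g h, φ g = ψ h ∧ σ = Equiv.sumCongr (Equiv.addLeft g) (Equiv.addLeft h)}
  mul_mem' := by
    rintro _ _ ⟨g, h, hgh, rfl⟩ ⟨g', h', hgh', rfl⟩
    exact ⟨g + g', h + h', by rw [map_add, map_add, hgh, hgh'], by simp⟩
  one_mem' := ⟨0, 0, by simp, by simp⟩
  inv_mem' := by
    rintro _ ⟨g, h, hgh, rfl⟩
    exact ⟨-g, -h, by rw [map_neg, map_neg, hgh], by simp⟩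

/-- The colouring of the pairs in `G ⊕ H` which is `f` of the difference on `G`, `h` of the
difference on `H`, and `c (φ x - ψ y)` on a pair of `x : G` and `y : H`. -/
def sumColor (φ : G →+ K) (ψ : H →+ K) (f : G → C) (h : H → C) (c : K → C) : G ⊕ H → G ⊕ H → C
  | .inl x, .inl y => f (x - y)
  | .inr x, .inr y => h (x - y)
  | .inl x, .inr y => c (φ x - ψ y)
  | .inr y, .inl x => c (φ x - ψ y)

theorem sumColor_comm (hf : ∀ d, f (-d) = f d) (hh : ∀ d, h (-d) = h d) (v w : G ⊕ H) :
    sumColor φ ψ f h c v w = sumColor φ ψ f h c w v := by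
  rcases v with x | x <;> rcases w with y | y <;> simp only [sumColor]
  · rw [← hf, neg_sub]
  · rw [← hh, neg_sub]

/-- The number of nonzero differences of colour `k`, that is, the degree of the edges of colour `k`
in the coloured Cayley graph of `f`. -/
noncomputable def colorDegree {V C : Type*} [Zero V] (f : V → C) (k : C) : ℕ :=
  {d | d ≠ 0 ∧ f d = k}.ncard

theorem ncard_sumColor_inl_eq_colorDegree (hc : ∀ z, c z ≠ k) (x : G) :
    {w | w ≠ .inl x ∧ sumColor φ ψ f h c w (.inl x) = k}.ncard = colorDegree f k := by
  rw [colorDegree, ← Set.ncard_image_of_injective {d | d ≠ 0 ∧ f d = k}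
    (Sum.inl_injective.comp (add_left_injective x))]
  congr 1
  ext (y | y)
  · simp [sumColor, sub_eq_zero, ← eq_sub_iff_add_eq]
  · simp [sumColor, hc]

theorem ncard_sumColor_inr_eq_colorDegree (hc : ∀ z, c z ≠ k) (x : H) :
    {w | w ≠ .inr x ∧ sumColor φ ψ f h c w (.inr x) = k}.ncard = colorDegree h k := by
  rw [colorDegree, ← Set.ncard_image_of_injective {d | d ≠ 0 ∧ h d = k}
    (Sum.inr_injective.comp (add_left_injective x))]
  congr 1
  ext (y | y)
  · simp [sumColor, hc]
  · simp [sumColor, sub_eq_zero, ← eq_sub_iff_add_eq]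

theorem ncard_neighbors_apply_perm {V : Type*} {γ : V → V → C} {σ : Equiv.Perm V}
    (hσ : ∀ v w, v ≠ w → γ (σ v) (σ w) = γ v w) (k : C) (v : V) :
    {w | w ≠ σ v ∧ γ w (σ v) = k}.ncard = {w | w ≠ v ∧ γ w v = k}.ncard := by
  rw [← Set.ncard_image_of_injective {w | w ≠ v ∧ γ w v = k} σ.injective]
  congr 1
  ext w
  obtain ⟨u, rfl⟩ := σ.surjective w
  rw [σ.injective.mem_set_image]
  simpa only [Set.mem_ofPred_eq, σ.injective.ne_iff] using
    and_congr_right fun huv => by rw [hσ u v huv]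

theorem mapsTo_range_inl_of_preserves_sumColor {σ : Equiv.Perm (G ⊕ H)}
    (hc : ∀ z, c z ≠ k) (hdeg : colorDegree f k ≠ colorDegree h k)
    (hσ : ∀ v w, v ≠ w → sumColor φ ψ f h c (σ v) (σ w) = sumColor φ ψ f h c v w) :
    Set.MapsTo σ (Set.range .inl) (Set.range .inl) := by
  rintro _ ⟨x, rfl⟩
  by_contra hx
  obtain ⟨y, hy⟩ : ∃ y, σ (.inl x) = .inr y := by
    cases hσx : σ (.inl x) with
    | inl x' => exact absurd ⟨x', hσx.symm⟩ hx
    | inr y => exact ⟨y, rfl⟩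
  have hncard := ncard_neighbors_apply_perm hσ k (.inl x)
  rw [hy, ncard_sumColor_inl_eq_colorDegree hc, ncard_sumColor_inr_eq_colorDegree hc] at hncard
  exact hdeg hncard.symm

theorem sumColor_apply_of_mem_translationPairs {σ : Equiv.Perm (G ⊕ H)}
    (hσ : σ ∈ translationPairs φ ψ) (v w : G ⊕ H) :
    sumColor φ ψ f h c (σ v) (σ w) = sumColor φ ψ f h c v w := by
  obtain ⟨g, h', hgh, rfl⟩ := hσ
  rcases v with x | x <;> rcases w with y | y <;> simp [sumColor, hgh]

theorem inGR4_translationPairs [Finite G] [Finite H] {f : G → Fin 4} {h : H → Fin 4}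
    {c : K → Fin 4} {k : Fin 4} (hf : ∀ d, f (-d) = f d) (hh : ∀ d, h (-d) = h d)
    (hc : ∀ z, c z ≠ k) (hdeg : colorDegree f k ≠ colorDegree h k)
    (hrigid : ∀ (α : Equiv.Perm G) (β : Equiv.Perm H),
      PreservesDiffColor f α → PreservesDiffColor h β →
      (∀ x y, c (φ (α x) - ψ (β y)) = c (φ x - ψ y)) →
        (∀ x, α x = α 0 + x) ∧ (∀ y, β y = β 0 + y) ∧ φ (α 0) = ψ (β 0)) :
    InGR4 (translationPairs φ ψ) := by
  refine ⟨Sym2.lift ⟨sumColor φ ψ f h c, sumColor_comm hf hh⟩, fun σ =>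
    ⟨fun hσ v w _ => sumColor_apply_of_mem_translationPairs hσ v w, fun hσ => ?_⟩⟩
  obtain ⟨⟨α, β⟩, rfl⟩ := Equiv.Perm.mem_sumCongrHom_range_of_perm_mapsTo_inl
    (mapsTo_range_inl_of_preserves_sumColor hc hdeg hσ)
  obtain ⟨hα, hβ, h0⟩ := hrigid α β
    (fun x y => by
      rcases eq_or_ne x y with rfl | hxy
      · rw [sub_self, sub_self]
      · exact hσ (.inl x) (.inl y) (Sum.inl_injective.ne hxy))
    (fun x y => by
      rcases eq_or_ne x y with rfl | hxy
      · rw [sub_self, sub_self]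
      · exact hσ (.inr x) (.inr y) (Sum.inr_injective.ne hxy))
    fun x y => hσ (.inl x) (.inr y) Sum.inl_ne_inr
  exact ⟨α 0, β 0, h0, congrArg₂ Equiv.sumCongr (Equiv.ext hα) (Equiv.ext hβ)⟩

end SumColor

section CrossColor

variable {G H K : Type*} [AddCommGroup G] [AddCommGroup H] [AddCommGroup K] {φ : G →+ K}
  {ψ : H →+ K} {a : K}

open Classical in
/-- The colouring of `K` that singles out `0` and `a`. Colour `3` is left unused, and for `a = 0` so
is colour `1`. -/
noncomputable def crossColor (a z : K) : Fin 4 :=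
  if z = 0 then 0 else if z = a then 1 else 2

theorem crossColor_eq_zero_iff {z : K} : crossColor a z = 0 ↔ z = 0 := by
  unfold crossColor
  split_ifs with h₀ <;> simp [h₀]

theorem crossColor_eq_one_iff (ha : a ≠ 0) {z : K} : crossColor a z = 1 ↔ z = a := by
  unfold crossColor
  split_ifs with h₀ hz
  · simp [h₀, ha.symm]
  all_goals simp [hz]

theorem crossColor_ne_three (a z : K) : crossColor a z ≠ 3 := by
  unfold crossColor
  split_ifs <;> simp

theorem apply_eq_of_preserves_crossColor (hφ : Function.Surjective φ) {α : G → G} {β : H → H}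
    {ε : ℤˣ} (hα : ∀ x, α x = α 0 + ε • x)
    (hcross : ∀ x y, crossColor a (φ (α x) - ψ (β y)) = crossColor a (φ x - ψ y)) (y : H) :
    ψ (β y) = φ (α 0) + ε • ψ y := by
  obtain ⟨x, hx⟩ := hφ (ψ y)
  have hxy := hcross x y
  rw [hx, sub_self, crossColor_eq_zero_iff.mpr rfl, crossColor_eq_zero_iff, sub_eq_zero, hα,
    map_add] at hxy
  rw [← hxy, ← hx, Units.smul_def, Units.smul_def, map_zsmul]

theorem sign_eq_one_of_preserves_crossColor (hφ : Function.Surjective φ) (ha : a + a ≠ 0)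
    {α : G → G} {β : H → H} {ε : ℤˣ} (hα : ∀ x, α x = α 0 + ε • x)
    (hcross : ∀ x y, crossColor a (φ (α x) - ψ (β y)) = crossColor a (φ x - ψ y)) : ε = 1 := by
  obtain ⟨x, hx⟩ := hφ a
  have ha0 : a ≠ 0 := fun h => ha (by rw [h, add_zero])
  have hεa : ε • a = a := by
    have h := hcross x 0
    rw [map_zero, sub_zero, hx, (crossColor_eq_one_iff ha0).mpr rfl, crossColor_eq_one_iff ha0,
      apply_eq_of_preserves_crossColor hφ hα hcross, hα] at h
    rwa [map_zero, smul_zero, add_zero, map_add, add_sub_cancel_left, Units.smul_def, map_zsmul,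
      hx] at h
  by_contra hε
  rw [Int.units_ne_iff_eq_neg.mp hε, Units.neg_smul, one_smul] at hεa
  exact ha (neg_eq_iff_add_eq_zero.mp hεa)

end CrossColor

section NotExponentTwo

variable {G H K : Type*} [AddCommGroup G] [AddCommGroup H] [AddCommGroup K]

theorem exists_irredundant_map_add_self_ne_zero [Finite G] (φ : G →+ K)
    (hφ : ∃ x, φ x + φ x ≠ 0) :
    ∃ (n : ℕ) (s : Fin (n + 1) → G), (∀ i, φ (s i) + φ (s i) ≠ 0) ∧ Irredundant s ∧
      AddSubgroup.closure (Set.range s) = ⊤ := by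
  obtain ⟨x, hx⟩ := hφ
  have hker : (φ + φ).ker ≠ ⊤ := fun h => hx (h ▸ AddSubgroup.mem_top x : x ∈ (φ + φ).ker)
  have : Nontrivial G := ⟨x, 0, fun h => hx (by rw [h, map_zero, add_zero])⟩
  exact exists_irredundant_of_closure_eq_top (Set.toFinite _)
    (addSubgroup_closure_compl_eq_top hker)

theorem exists_irredundant_forall_not_eqUpToSign_sub [Finite G] (φ : G →+ K)
    (hφ : ∃ x, φ x + φ x ≠ 0) :
    ∃ (n : ℕ) (s : Fin (n + 1) → G), (∀ i, φ (s i) + φ (s i) ≠ 0) ∧ Irredundant s ∧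
      AddSubgroup.closure (Set.range s) = ⊤ ∧
      ∀ i : Fin n, ¬EqUpToSign (φ (s i.succ - s i.castSucc)) (φ (s 0)) := by
  obtain ⟨n, s, hinv, hs, hgen⟩ := exists_irredundant_map_add_self_ne_zero φ hφ
  obtain ⟨t, hts, hpath⟩ := exists_eqUpToSign_forall_not_eqUpToSign_sub φ hinv
  exact ⟨n, t, fun i => ((hts i).map φ).add_self_eq_zero_iff.not.mpr (hinv i),
    hs.of_eqUpToSign hts, closure_range_eq_top_of_eqUpToSign hgen hts, hpath⟩

theorem colorDegree_pathColor_three_ne_zero [Finite G] {n : ℕ} {s : Fin (n + 1) → G}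
    (hs : Irredundant s) : colorDegree (pathColor s 3) 3 ≠ 0 :=
  Set.ncard_ne_zero_of_mem ⟨hs.ne_zero 0, pathColor_root s 3⟩

theorem colorDegree_pathColor_two_eq_zero {n : ℕ} (s : Fin (n + 1) → G) :
    colorDegree (pathColor s 2) 3 = 0 := by
  have hempty : {d | d ≠ 0 ∧ pathColor s 2 d = 3} = ∅ :=
    Set.eq_empty_of_forall_notMem fun d hd => pathColor_two_ne_three s d hd.2
  rw [colorDegree, hempty, Set.ncard_empty]

theorem inGR4_translationPairs_of_add_self_ne_zero [Finite G] [Finite H] {φ : G →+ K}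
    {ψ : H →+ K} (hφ : Function.Surjective φ) (hψ : Function.Surjective ψ)
    {a : K} (ha : a + a ≠ 0) : InGR4 (translationPairs φ ψ) := by
  obtain ⟨x, rfl⟩ := hφ a
  obtain ⟨y, hy⟩ := hψ (φ x)
  obtain ⟨n, s, hsinv, hs, hsgen⟩ := exists_irredundant_map_add_self_ne_zero φ ⟨x, ha⟩
  obtain ⟨m, t, htinv, ht, htgen, hpath⟩ :=
    exists_irredundant_forall_not_eqUpToSign_sub ψ ⟨y, by rwa [hy]⟩
  have hsinv' : ∀ i, s i + s i ≠ 0 := fun i h => hsinv i (by rw [← map_add, h, map_zero])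
  refine inGR4_translationPairs (pathColor_neg s 3) (pathColor_neg t 2)
    (crossColor_ne_three (φ x))
    ((colorDegree_pathColor_two_eq_zero t).trans_ne
      (colorDegree_pathColor_three_ne_zero hs).symm).symm fun α β hα hβ hcross => ?_
  obtain ⟨ε, hε⟩ := eq_add_units_smul_of_preserves_pathColor_three hs hsgen hsinv' α.injective hα
  obtain rfl := sign_eq_one_of_preserves_crossColor hφ ha hε hcross
  have hψβ := apply_eq_of_preserves_crossColor hφ hε hcross
  simp only [one_smul] at hε hψβ
  exact ⟨hε, eq_add_of_preserves_pathColor_two ht htgen htinv hpath β.injective hβ hψβ,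
    by simpa only [map_zero, add_zero] using (hψβ 0).symm⟩

end NotExponentTwo

section ExponentTwo

variable {G C : Type*} [AddCommGroup G]

/-- A colouring of the differences in `G` is translation-rigid if the coloured Cayley graph has no
automorphisms besides the translations. -/
def TranslationRigid (f : G → C) : Prop :=
  ∀ σ : Equiv.Perm G, PreservesDiffColor f σ → ∀ x, σ x = σ 0 + x

theorem TranslationRigid.comp {D : Type*} {f : G → C} (hf : TranslationRigid f) {e : C → D}
    (he : Function.Injective e) : TranslationRigid (e ∘ f) := fun σ hσ =>
  hf σ fun x y => he (hσ x y)

theorem colorDegree_comp {V D : Type*} [Zero V] (f : V → C) {e : C → D}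
    (he : Function.Injective e) (k : C) :
    colorDegree (e ∘ f) (e k) = colorDegree f k := by
  simp only [colorDegree, Function.comp_apply, he.eq_iff]

theorem exists_translationRigid_colorDegree_three_eq_one [Finite G] [Nontrivial G]
    (hG : ∀ g : G, g + g = 0) :
    ∃ f : G → Fin 4, TranslationRigid f ∧ colorDegree f 3 = 1 := by
  obtain ⟨n, s, -, hs, hgen⟩ :=
    exists_irredundant_of_closure_eq_top (Set.toFinite _) (AddSubgroup.closure_univ (G := G))
  refine ⟨pathColor s 3, fun σ hσ =>
    eq_add_of_preserves_pathColor_three_of_add_self_eq_zero hs hgen hG σ.injective hσ,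
    Set.ncard_eq_one.mpr ⟨s 0, ?_⟩⟩
  ext d
  simp only [Set.mem_ofPred_eq, pathColor_three_eq_three_iff, Set.mem_singleton_iff, EqUpToSign,
    ← eq_neg_of_add_eq_zero_left (hG (s 0)), or_self]
  exact and_iff_right_of_imp fun h => h ▸ hs.ne_zero 0

theorem exists_colorDegree_ne_one [Finite G] (hG : ∀ g : G, g + g = 0) (f : G → Fin 4) :
    ∃ k, colorDegree f k ≠ 1 := by
  by_contra! h
  have hbij : Function.Bijective fun d : {d : G // d ≠ 0} => f d := by
    refine (Function.bijective_iff_existsUnique _).mpr fun k => ?_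
    obtain ⟨d, hd⟩ := Set.ncard_eq_one.mp (h k)
    have hmem : d ≠ 0 ∧ f d = k := hd.ge rfl
    exact ⟨⟨d, hmem.1⟩, hmem.2, fun d' hd' => Subtype.ext (hd.le ⟨d'.2, hd'⟩)⟩
  classical
  have hcard : Nat.card G = 5 := by
    rw [← Nat.card_congr (Equiv.optionSubtypeNe (0 : G)), Finite.card_option,
      Nat.card_eq_of_bijective _ hbij, Nat.card_fin]
  have hzero : ∀ g : G, g = 0 := fun g => by
    have h5 : 5 • g = 0 := hcard ▸ card_nsmul_eq_zero'
    simpa only [succ_nsmul, zero_nsmul, zero_add, hG] using h5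
  have : Subsingleton G := ⟨fun g g' => (hzero g).trans (hzero g').symm⟩
  rw [Nat.card_unique] at hcard
  omega

theorem exists_translationRigid_colorDegree_three_ne_one [Finite G] (hG : ∀ g : G, g + g = 0) :
    ∃ f : G → Fin 4, TranslationRigid f ∧ colorDegree f 3 ≠ 1 := by
  obtain ⟨f, hf⟩ : ∃ f : G → Fin 4, TranslationRigid f := by
    rcases subsingleton_or_nontrivial G with hsub | hnontrivial
    · exact ⟨fun _ => 0, fun _ _ _ => Subsingleton.elim _ _⟩
    · obtain ⟨f, hf, -⟩ := exists_translationRigid_colorDegree_three_eq_one hG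
      exact ⟨f, hf⟩
  obtain ⟨k, hk⟩ := exists_colorDegree_ne_one hG f
  have hswap := colorDegree_comp f (Equiv.swap k 3).injective k
  rw [Equiv.swap_apply_left] at hswap
  exact ⟨Equiv.swap k 3 ∘ f, hf.comp (Equiv.injective _), hswap.trans_ne hk⟩

theorem inGR4_translationPairs_of_add_self_eq_zero {H K : Type*} [AddCommGroup H]
    [AddCommGroup K] [Finite G] [Finite H] [Nontrivial G] {φ : G →+ K} {ψ : H →+ K}
    (hφ : Function.Surjective φ) (hG : ∀ g : G, g + g = 0) (hH : ∀ h : H, h + h = 0) :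
    InGR4 (translationPairs φ ψ) := by
  obtain ⟨f, hf, hf3⟩ := exists_translationRigid_colorDegree_three_eq_one hG
  obtain ⟨h, hh, hh3⟩ := exists_translationRigid_colorDegree_three_ne_one hH
  refine inGR4_translationPairs
    (fun d => by rw [← eq_neg_of_add_eq_zero_left (hG d)])
    (fun d => by rw [← eq_neg_of_add_eq_zero_left (hH d)])
    (crossColor_ne_three 0) (hf3.trans_ne hh3.symm) fun α β hα hβ hcross => ?_
  have hψβ := apply_eq_of_preserves_crossColor hφ (ε := 1)
    (by simpa only [one_smul] using hf α hα) hcross 0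
  exact ⟨hf α hα, hh β hβ, by simpa only [map_zero, smul_zero, add_zero] using hψβ.symm⟩

end ExponentTwo

section QuotientPairs

variable {B : Type*} [AddCommGroup B]

/-- The fibre product of `B ⧸ P` and `B ⧸ Q` over `B ⧸ (P ⊔ Q)` acting by translations; this is
the permutation group which `B` induces on the disjoint union of `B ⧸ P` and `B ⧸ Q`. -/
def quotientPairs (P Q : AddSubgroup B) : Subgroup (Equiv.Perm ((B ⧸ P) ⊕ (B ⧸ Q))) :=
  translationPairs (QuotientAddGroup.map P (P ⊔ Q) (AddMonoidHom.id B) le_sup_left)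
    (QuotientAddGroup.map Q (P ⊔ Q) (AddMonoidHom.id B) le_sup_right)

theorem mem_quotientPairs_iff {P Q : AddSubgroup B} {σ : Equiv.Perm ((B ⧸ P) ⊕ (B ⧸ Q))} :
    σ ∈ quotientPairs P Q ↔
      ∃ b : B, σ = Equiv.sumCongr (Equiv.addLeft (b : B ⧸ P)) (Equiv.addLeft (b : B ⧸ Q)) := by
  refine ⟨?_, fun ⟨b, hb⟩ => ⟨b, b, rfl, hb⟩⟩
  rintro ⟨g, h, hgh, rfl⟩
  obtain ⟨b, rfl⟩ := QuotientAddGroup.mk_surjective g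
  obtain ⟨c, rfl⟩ := QuotientAddGroup.mk_surjective h
  obtain ⟨p, hp, q, hq, hpq⟩ := AddSubgroup.mem_sup.mp (QuotientAddGroup.eq.mp hgh)
  have hP : ((b + p : B) : B ⧸ P) = b := QuotientAddGroup.mk_add_of_mem b hp
  have hQ : ((b + p : B) : B ⧸ Q) = c := by
    rw [QuotientAddGroup.eq]
    convert hq using 1
    simp only [AddMonoidHom.id_apply] at hpq
    rw [neg_add_rev, add_assoc, ← hpq, neg_add_cancel_left]
  exact ⟨b + p, by rw [hP, hQ]⟩

theorem inGR4_quotientPairs [Finite B] {P Q : AddSubgroup B} (hP : P ≠ ⊤)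
    (hdouble : (∀ b, b + b ∈ P ⊔ Q) → ∀ b, b + b ∈ P ⊓ Q) : InGR4 (quotientPairs P Q) := by
  have hsurj {L : AddSubgroup B} (hL : L ≤ P ⊔ Q) :
      Function.Surjective (QuotientAddGroup.map L (P ⊔ Q) (AddMonoidHom.id B) hL) :=
    QuotientAddGroup.map_surjective_of_surjective _ _ _ QuotientAddGroup.mk_surjective _
  by_cases hK : ∀ b, b + b ∈ P ⊔ Q
  · have hexp {L : AddSubgroup B} (hL : P ⊓ Q ≤ L) (g : B ⧸ L) : g + g = 0 := by
      obtain ⟨b, rfl⟩ := QuotientAddGroup.mk_surjective g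
      exact (QuotientAddGroup.eq_zero_iff _).mpr (hL (hdouble hK b))
    have : Nontrivial (B ⧸ P) := QuotientAddGroup.nontrivial_iff.mpr hP
    exact inGR4_translationPairs_of_add_self_eq_zero (hsurj le_sup_left) (hexp inf_le_left)
      (hexp inf_le_right)
  · obtain ⟨b, hb⟩ := not_forall.mp hK
    exact inGR4_translationPairs_of_add_self_ne_zero (hsurj le_sup_left) (hsurj le_sup_right)
      (a := (b : B ⧸ (P ⊔ Q))) fun h => hb ((QuotientAddGroup.eq_zero_iff _).mp h)

end QuotientPairs

theorem InGR4.of_equiv {V X : Type*} {A' : Subgroup (Equiv.Perm V)} {A : Subgroup (Equiv.Perm X)}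
    (h : InGR4 A') (e : V ≃ X) (hA : ∀ σ, σ ∈ A ↔ e.symm.permCongr σ ∈ A') : InGR4 A := by
  obtain ⟨γ, hγ⟩ := h
  refine ⟨γ ∘ Sym2.map e.symm, fun σ => ?_⟩
  rw [hA, hγ, e.symm.forall_congr_left]
  refine forall_congr' fun x => ?_
  rw [e.symm.forall_congr_left]
  simp

section TwoOrbits

variable {B X : Type*} [AddCommGroup B] [AddAction B X] {A : Subgroup (Equiv.Perm X)} {x y : X}

/-- `A` consists of the permutations of `X` given by the action of `B`, which need not be
faithful. -/
def IsInducedBy (B : Type*) {X : Type*} [AddCommGroup B] [AddAction B X]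
    (A : Subgroup (Equiv.Perm X)) : Prop :=
  ∀ σ, σ ∈ A ↔ ∃ b : B, ∀ z, σ z = b +ᵥ z

theorem IsInducedBy.toPerm_mem (hA : IsInducedBy B A) (b : B) : AddAction.toPerm b ∈ A :=
  (hA _).mpr ⟨b, fun _ => rfl⟩

theorem orbitOf_eq_orbit (hA : IsInducedBy B A) (x : X) :
    orbitOf (A : Set (Equiv.Perm X)) x = AddAction.orbit B x := by
  ext z
  refine ⟨fun ⟨a, ha, haz⟩ => ?_, fun ⟨b, hb⟩ => ⟨AddAction.toPerm b, hA.toPerm_mem b, hb⟩⟩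
  obtain ⟨b, hb⟩ := (hA a).mp ha
  exact ⟨b, (hb x).symm.trans haz⟩

/-- The disjoint union of the orbit maps of `x` and `y`, each on the cosets of the stabilizer. -/
def twoOrbitMap (B : Type*) [AddCommGroup B] [AddAction B X] (x y : X) :
    (B ⧸ AddAction.stabilizer B x) ⊕ (B ⧸ AddAction.stabilizer B y) → X :=
  Sum.elim (AddAction.ofQuotientStabilizer B x) (AddAction.ofQuotientStabilizer B y)

theorem twoOrbitMap_bijective (hxy : AddAction.orbit B x ≠ AddAction.orbit B y)
    (hcov : ∀ z : X, z ∈ AddAction.orbit B x ∨ z ∈ AddAction.orbit B y) :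
    Function.Bijective (twoOrbitMap B x y) := by
  refine ⟨Function.Injective.sumElim (AddAction.injective_ofQuotientStabilizer B x)
    (AddAction.injective_ofQuotientStabilizer B y) fun g h hgh => hxy ?_, fun z => ?_⟩
  · obtain ⟨b, rfl⟩ := QuotientAddGroup.mk_surjective g
    obtain ⟨c, rfl⟩ := QuotientAddGroup.mk_surjective h
    rw [← AddAction.orbit_vadd b x, ← AddAction.orbit_vadd c y]
    exact congrArg _ hgh
  · rcases hcov z with ⟨b, rfl⟩ | ⟨b, rfl⟩
    · exact ⟨.inl b, rfl⟩
    · exact ⟨.inr b, rfl⟩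

theorem twoOrbitMap_sumCongr_addLeft (b : B)
    (w : (B ⧸ AddAction.stabilizer B x) ⊕ (B ⧸ AddAction.stabilizer B y)) :
    twoOrbitMap B x y (Equiv.sumCongr (Equiv.addLeft ↑b) (Equiv.addLeft ↑b) w) =
      b +ᵥ twoOrbitMap B x y w := by
  rcases w with g | g <;> obtain ⟨c, rfl⟩ := QuotientAddGroup.mk_surjective g
  · exact add_vadd b c x
  · exact add_vadd b c y

theorem mem_iff_permCongr_mem_quotientPairs (hA : IsInducedBy B A)
    (e : (B ⧸ AddAction.stabilizer B x) ⊕ (B ⧸ AddAction.stabilizer B y) ≃ X)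
    (he : ⇑e = twoOrbitMap B x y) (σ : Equiv.Perm X) :
    σ ∈ A ↔ e.symm.permCongr σ ∈
      quotientPairs (AddAction.stabilizer B x) (AddAction.stabilizer B y) := by
  rw [hA, mem_quotientPairs_iff]
  refine exists_congr fun b => ?_
  rw [Equiv.ext_iff, e.symm.forall_congr_left]
  refine forall_congr' fun w => ?_
  rw [Equiv.permCongr_apply, Equiv.symm_symm, Equiv.symm_apply_eq, he,
    twoOrbitMap_sumCongr_addLeft]

theorem factorIsElem2_orbit (hA : IsInducedBy B A)
    (hcov : ∀ z : X, z ∈ AddAction.orbit B x ∨ z ∈ AddAction.orbit B y)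
    (hdouble : ∀ b : B, b + b ∈ AddAction.stabilizer B x ⊔ AddAction.stabilizer B y) :
    FactorIsElem2 A (AddAction.orbit B x) := by
  intro a ha
  obtain ⟨b, hb⟩ := (hA a).mp ha
  obtain ⟨p, hp, q, hq, hpq⟩ := AddSubgroup.mem_sup.mp (hdouble b)
  refine ⟨AddAction.toPerm q, hA.toPerm_mem q, ?_, fun z hz => ?_⟩
  · rintro _ ⟨c, rfl⟩
    calc q +ᵥ c +ᵥ x = q +ᵥ p +ᵥ c +ᵥ x := by
          rw [vadd_comm p, AddAction.mem_stabilizer_iff.mp hp]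
      _ = (b + b) +ᵥ c +ᵥ x := by rw [vadd_vadd, add_comm q, hpq]
      _ = a (a (c +ᵥ x)) := by rw [hb, hb, add_vadd]
  · obtain ⟨c, rfl⟩ := (hcov z).resolve_left hz
    change q +ᵥ c +ᵥ y = c +ᵥ y
    rw [vadd_comm, AddAction.mem_stabilizer_iff.mp hq]

theorem add_self_mem_stabilizer (hA : IsInducedBy B A)
    (hsq : ∀ a ∈ A, ∀ z ∈ AddAction.orbit B x, a (a z) = z) (b : B) :
    b + b ∈ AddAction.stabilizer B x := by
  rw [AddAction.mem_stabilizer_iff, add_vadd]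
  exact hsq (AddAction.toPerm b) (hA.toPerm_mem b) x (AddAction.mem_orbit_self x)

theorem inGR4_of_two_orbits_of_stabilizer_ne_top [Finite B]
    (hA : IsInducedBy B A)
    (hxy : AddAction.orbit B x ≠ AddAction.orbit B y)
    (hcov : ∀ z : X, z ∈ AddAction.orbit B x ∨ z ∈ AddAction.orbit B y)
    (hcond : ∀ z : X, FactorIsElem2 A (AddAction.orbit B z) →
      ∀ a ∈ A, ∀ w ∈ AddAction.orbit B z, a (a w) = w)
    (hx : AddAction.stabilizer B x ≠ ⊤) : InGR4 A := by
  refine (inGR4_quotientPairs hx fun hdouble b => ⟨?_, ?_⟩).of_equiv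
    (.ofBijective _ (twoOrbitMap_bijective hxy hcov))
    (mem_iff_permCongr_mem_quotientPairs hA _ rfl)
  · exact add_self_mem_stabilizer hA (hcond x (factorIsElem2_orbit hA hcov hdouble)) b
  · rw [sup_comm] at hdouble
    exact add_self_mem_stabilizer hA
      (hcond y (factorIsElem2_orbit hA (fun z => (hcov z).symm) hdouble)) b

theorem stabilizer_ne_top_of_ne_bot (hA : IsInducedBy B A)
    (hcov : ∀ z : X, z ∈ AddAction.orbit B x ∨ z ∈ AddAction.orbit B y) (hnt : A ≠ ⊥) :
    AddAction.stabilizer B x ≠ ⊤ ∨ AddAction.stabilizer B y ≠ ⊤ := by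
  by_contra! ⟨hx, hy⟩
  have hfix : ∀ (b : B) (z : X), b +ᵥ z = z := fun b z => by
    have hfixed {u : X} (hu : AddAction.stabilizer B u = ⊤) (c : B) : b +ᵥ c +ᵥ u = c +ᵥ u := by
      rw [vadd_comm b c u, AddAction.mem_stabilizer_iff.mp (hu.ge (AddSubgroup.mem_top b))]
    rcases hcov z with ⟨c, rfl⟩ | ⟨c, rfl⟩
    exacts [hfixed hx c, hfixed hy c]
  refine hnt ((Subgroup.eq_bot_iff_forall A).mpr fun a ha => Equiv.ext fun z => ?_)
  obtain ⟨b, hb⟩ := (hA a).mp ha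
  exact (hb z).trans (hfix b z)

theorem inGR4_of_two_orbits [Finite B] (hA : IsInducedBy B A)
    (hnt : A ≠ ⊥) (hxy : AddAction.orbit B x ≠ AddAction.orbit B y)
    (hcov : ∀ z : X, z ∈ AddAction.orbit B x ∨ z ∈ AddAction.orbit B y)
    (hcond : ∀ z : X, FactorIsElem2 A (AddAction.orbit B z) →
      ∀ a ∈ A, ∀ w ∈ AddAction.orbit B z, a (a w) = w) : InGR4 A := by
  rcases stabilizer_ne_top_of_ne_bot hA hcov hnt with hx | hy
  · exact inGR4_of_two_orbits_of_stabilizer_ne_top hA hxy hcov hcond hx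
  · exact inGR4_of_two_orbits_of_stabilizer_ne_top hA hxy.symm (fun z => (hcov z).symm) hcond hy

end TwoOrbits

/-- A nontrivial abelian subgroup `A ≤ Sym(X)` with exactly two orbits, such that for
every orbit `O`, if `A_O / A_O^*` is an elementary abelian 2-group then so is `A_O`,
is the automorphism group of a 4-coloured graph on `X`. -/
theorem statement5 (X : Type*) [Fintype X] (A : Subgroup (Equiv.Perm X))
    (hnt : A ≠ ⊥) (hab : ∀ a ∈ A, ∀ b ∈ A, a * b = b * a)
    (h2 : ∃ x y : X, orbitOf (A : Set (Equiv.Perm X)) x ≠ orbitOf (A : Set (Equiv.Perm X)) y ∧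
      ∀ z : X, orbitOf (A : Set (Equiv.Perm X)) z = orbitOf (A : Set (Equiv.Perm X)) x ∨
        orbitOf (A : Set (Equiv.Perm X)) z = orbitOf (A : Set (Equiv.Perm X)) y)
    (hcond : ∀ x : X, FactorIsElem2 A (orbitOf (A : Set (Equiv.Perm X)) x) →
      ∀ a ∈ A, ∀ z ∈ orbitOf (A : Set (Equiv.Perm X)) x, a (a z) = z) :
    InGR4 A := by
  let : CommGroup A :=
    { (inferInstance : Group A) with mul_comm := fun a b => Subtype.ext (hab a a.2 b b.2) }
  have hA : IsInducedBy (Additive A) A := fun σ =>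
    ⟨fun hσ => ⟨.ofMul ⟨σ, hσ⟩, fun _ => rfl⟩, fun ⟨b, hb⟩ => Equiv.ext hb ▸ b.toMul.2⟩
  obtain ⟨x, y, hxy, hcov⟩ := h2
  simp only [orbitOf_eq_orbit hA, AddAction.orbit_eq_iff] at hxy hcov hcond
  exact inGR4_of_two_orbits hA hnt hxy hcov hcond
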